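/- For every model triple point, all signs s₁, s₂, s₃ ∈ {+1, −1}, and all sufficiently small ε > 0, the model triple-point integrals have the explicit values I_X^{X′₁, s₁, s₂, s₃} = s₁s₂/2, I_X^{(X′₂,l), s₁, s₂, s₃} = I_X^{(X′₂,r), s₁, s₂, s₃} = s₂s₃/2, and I_X^{X′₃, s₁, s₂, s₃} = s₃s₁/2. -/

import Mathlib

open MeasureTheory Filter Topology Set

noncomputable section

abbrev E2 : Type := EuclideanSpace ℝ (Fin 2)
abbrev E3 : Type := EuclideanSpace ℝ (Fin 3)
abbrev E4 : Type := EuclideanSpace ℝ (Fin 4)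
abbrev E6 : Type := EuclideanSpace ℝ (Fin 6)

/-- The point of `ℝ³` with the given coordinates. -/
def mk3 (x y z : ℝ) : E3 := (WithLp.equiv 2 (Fin 3 → ℝ)).symm ![x, y, z]

/-- The north pole `N = (0,0,1)` of `S² ⊆ ℝ³`. -/
def NP : E3 := mk3 0 0 1

/-- Projection of `ℝ³` onto the plane `N^⊥` (the first two coordinates). -/
def pr12 (v : E3) : ℝ × ℝ := (v 0, v 1)

/-- The `N`-coordinate. -/
def pr3 (v : E3) : ℝ := v 2

/-- `unitv v = v / ‖v‖`. -/
def unitv (v : E3) : E3 := ‖v‖⁻¹ • v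

/-- Determinant of the projections to `N^⊥` of two vectors (first vector, then second). -/
def cross2 (a b : E3) : ℝ := a 0 * b 1 - a 1 * b 0

/-- 3×3 determinant (scalar triple product); for `p ∈ S²` and `v, w` tangent to `S²` at
`p`, this is the value of the standard area form of `S²` at `p` on `(v, w)`. -/
def det3 (p v w : E3) : ℝ :=
  p 0 * (v 1 * w 2 - v 2 * w 1) - p 1 * (v 0 * w 2 - v 2 * w 0) +
    p 2 * (v 0 * w 1 - v 1 * w 0)

/-! ### Long knots and 3-component long links -/

/-- A long knot: a smooth embedding `ℝ ↪ ℝ³` which is standard outside `[-1,1]`. -/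
def IsLongKnot (f : ℝ → E3) : Prop :=
  ContDiff ℝ (⊤ : ℕ∞) f ∧ Function.Injective f ∧ (∀ t, deriv f t ≠ 0) ∧
    ∀ x : ℝ, 1 ≤ |x| → f x = mk3 x 0 0

/-- Smooth isotopy of long knots. -/
def KnotIsotopic (f₀ f₁ : ℝ → E3) : Prop :=
  ∃ H : ℝ → ℝ → E3,
    ContDiff ℝ (⊤ : ℕ∞) (fun p : ℝ × ℝ => H p.1 p.2) ∧
    (∀ s, IsLongKnot (H s)) ∧ H 0 = f₀ ∧ H 1 = f₁

/-- A 3-component long link: a smooth embedding `ℝ ⊔ ℝ ⊔ ℝ ↪ ℝ³`, standard outside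
`[-1,1]`, component `k` (for `k = 1,2,3`, i.e. index `i = k - 1 : Fin 3`) having ends
`x ↦ (x, (2 - k)|x|, 0)`. -/
def IsLongLink3 (f : Fin 3 → ℝ → E3) : Prop :=
  (∀ i, ContDiff ℝ (⊤ : ℕ∞) (f i)) ∧
  (∀ i j s t, f i s = f j t → i = j ∧ s = t) ∧
  (∀ i t, deriv (f i) t ≠ 0) ∧
  ∀ i (x : ℝ), 1 ≤ |x| → f i x = mk3 x ((1 - ((i : ℕ) : ℝ)) * |x|) 0

/-- Smooth isotopy of 3-component long links. -/
def LinkIsotopic (f₀ f₁ : Fin 3 → ℝ → E3) : Prop :=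
  ∃ H : ℝ → Fin 3 → ℝ → E3,
    (∀ i, ContDiff ℝ (⊤ : ℕ∞) (fun p : ℝ × ℝ => H p.1 i p.2)) ∧
    (∀ s, IsLongLink3 (H s)) ∧ H 0 = f₀ ∧ H 1 = f₁

/-! ### Diagrams, crossings and Gauss diagram pairings -/

/-- All self-intersections of the projection of the long knot `f` are transverse
(any two branches meeting at a multiple point have independent projected tangents). -/
def TransverseK (f : ℝ → E3) : Prop :=
  ∀ t u, t ≠ u → pr12 (f t) = pr12 (f u) → cross2 (deriv f t) (deriv f u) ≠ 0

/-- The diagram of `f` has only transverse double points. -/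
def OnlyDoubleK (f : ℝ → E3) : Prop :=
  TransverseK f ∧
  ∀ t u v : ℝ, t ≠ u → u ≠ v → t ≠ v →
    pr12 (f t) = pr12 (f u) → pr12 (f u) = pr12 (f v) → False

/-- All self-intersections of the projection of the long link `f` are transverse. -/
def TransverseL (f : Fin 3 → ℝ → E3) : Prop :=
  ∀ i j s t, (i, s) ≠ (j, t) → pr12 (f i s) = pr12 (f j t) →
    cross2 (deriv (f i) s) (deriv (f j) t) ≠ 0

/-- The diagram of the long link `f` has only transverse double points. -/
def OnlyDoubleL (f : Fin 3 → ℝ → E3) : Prop :=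
  TransverseL f ∧
  ∀ i j k s t u, (i, s) ≠ (j, t) → (j, t) ≠ (k, u) → (i, s) ≠ (k, u) →
    pr12 (f i s) = pr12 (f j t) → pr12 (f j t) = pr12 (f k u) → False

/-- Crossings of a long knot diagram: pairs `(t, u)` with `t` on the lower and `u` on the
upper strand; the corresponding chord of the Gauss diagram is directed from `t` to `u`. -/
def CrossingK (f : ℝ → E3) : Set (ℝ × ℝ) :=
  {p | p.1 ≠ p.2 ∧ pr12 (f p.1) = pr12 (f p.2) ∧ pr3 (f p.1) < pr3 (f p.2)}

/-- The sign of the crossing `p = (t, u)` (`+1` iff the projected tangent of the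
over-strand followed by that of the under-strand is a positive basis of `N^⊥`). -/
def csignK (f : ℝ → E3) (p : ℝ × ℝ) : ℝ :=
  Real.sign (cross2 (deriv f p.2) (deriv f p.1))

/-- Gauss diagram pairing for a long knot: the sum, over all pairs of chords of the Gauss
diagram of `f` in the relative position prescribed by `R`, of the products of signs. -/
def pairK (f : ℝ → E3) (R : ℝ × ℝ → ℝ × ℝ → Prop) : ℝ :=
  ∑ᶠ q ∈ {q : (ℝ × ℝ) × (ℝ × ℝ) | q.1 ∈ CrossingK f ∧ q.2 ∈ CrossingK f ∧ R q.1 q.2},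
    csignK f q.1 * csignK f q.2

/-- `⟨X, G_D⟩` : chords `x₁ → x₃` and `x₄ → x₂` with `x₁ < x₂ < x₃ < x₄`. -/
def pairXK (f : ℝ → E3) : ℝ :=
  pairK f fun p q => p.1 < q.2 ∧ q.2 < p.2 ∧ p.2 < q.1

/-- `⟨X′₁, G_D⟩` : chords `a → b` and `c → a` with `a < b < c`. -/
def pairX1K (f : ℝ → E3) : ℝ :=
  pairK f fun p q => q.2 = p.1 ∧ p.1 < p.2 ∧ p.2 < q.1

/-- `⟨X′₂, G_D⟩` : chords `a → b` and `c → b` with `a < b < c`. -/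
def pairX2K (f : ℝ → E3) : ℝ :=
  pairK f fun p q => q.2 = p.2 ∧ p.1 < p.2 ∧ p.2 < q.1

/-- `⟨X′₃, G_D⟩` : chords `a → c` and `c → b` with `a < b < c`. -/
def pairX3K (f : ℝ → E3) : ℝ :=
  pairK f fun p q => p.2 = q.1 ∧ p.1 < q.2 ∧ q.2 < p.2

/-- Crossings of a 3-strand diagram between strand `i` (under) and strand `j` (over);
the corresponding chord is directed from `p.1` on strand `i` to `p.2` on strand `j`. -/
def CrossingL (f : Fin 3 → ℝ → E3) (i j : Fin 3) : Set (ℝ × ℝ) :=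
  {p | pr12 (f i p.1) = pr12 (f j p.2) ∧ pr3 (f i p.1) < pr3 (f j p.2)}

/-- The sign of the crossing `p` between strand `i` (under) and strand `j` (over). -/
def csignL (f : Fin 3 → ℝ → E3) (i j : Fin 3) (p : ℝ × ℝ) : ℝ :=
  Real.sign (cross2 (deriv (f j) p.2) (deriv (f i) p.1))

/-- Gauss diagram pairing for a 3-component long link. -/
def pairL (f : Fin 3 → ℝ → E3) (i₁ j₁ i₂ j₂ : Fin 3) (R : ℝ × ℝ → ℝ × ℝ → Prop) : ℝ :=
  ∑ᶠ q ∈ {q : (ℝ × ℝ) × (ℝ × ℝ) |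
      q.1 ∈ CrossingL f i₁ j₁ ∧ q.2 ∈ CrossingL f i₂ j₂ ∧ R q.1 q.2},
    csignL f i₁ j₁ q.1 * csignL f i₂ j₂ q.2

/-- `⟨𝒳₁, G_D⟩` : a chord from `t` on strand 1 to strand 2, and a chord from strand 3 to
`t′` on strand 1, with `t < t′`. -/
def pairL1 (f : Fin 3 → ℝ → E3) : ℝ := pairL f 0 1 2 0 fun p q => p.1 < q.2

/-- `⟨𝒳₂, G_D⟩` : a chord from strand 1 to `u` on strand 2, and a chord from strand 3 to
`u′` on strand 2, with `u < u′`. -/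
def pairL2 (f : Fin 3 → ℝ → E3) : ℝ := pairL f 0 1 2 1 fun p q => p.2 < q.2

/-- `⟨𝒳₃, G_D⟩` : a chord from strand 1 to `v` on strand 3, and a chord from `v′` on
strand 3 to strand 2, with `v < v′`. -/
def pairL3 (f : Fin 3 → ℝ → E3) : ℝ := pairL f 0 2 2 1 fun p q => p.2 < q.1

/-- `⟨𝒳′₁, G_D⟩` : as `𝒳₁` but with `t = t′` (a triple point). -/
def pairL1' (f : Fin 3 → ℝ → E3) : ℝ := pairL f 0 1 2 0 fun p q => p.1 = q.2

/-- `⟨𝒳′₂, G_D⟩` : as `𝒳₂` but with `u = u′` (a triple point). -/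
def pairL2' (f : Fin 3 → ℝ → E3) : ℝ := pairL f 0 1 2 1 fun p q => p.2 = q.2

/-- `⟨𝒳′₃, G_D⟩` : as `𝒳₃` but with `v = v′` (a triple point). -/
def pairL3' (f : Fin 3 → ℝ → E3) : ℝ := pairL f 0 2 2 1 fun p q => p.2 = q.1

/-! ### The localized unit 2-form `η` on `S²` -/

/-- The action of a 2×2 matrix on `ℝ³ = ℝ² × ℝ`, acting on the first two coordinates. -/
def act2 (A : Matrix (Fin 2) (Fin 2) ℝ) (v : E3) : E3 :=
  mk3 (A 0 0 * v 0 + A 0 1 * v 1) (A 1 0 * v 0 + A 1 1 * v 1) (v 2)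

/-- `IsEtaForm ε g` says that `η = g · (standard area form of S²)` is a smooth 2-form on
`S²` such that: (i) `supp η` lies in the `ε`-neighbourhood of the north pole `N`;
(ii) `φ*η = det φ · η` for every `φ ∈ O(2) ⊆ O(3)` (since `φ* (area form) = det φ ·
(area form)`, this amounts to `g ∘ φ = g`); (iii) `∫_{S²} η = 1`, i.e. the integral of
`g` against the surface measure of `S²` is `1`. -/
def IsEtaForm (ε : ℝ) (g : E3 → ℝ) : Prop :=
  ContDiff ℝ (⊤ : ℕ∞) g ∧
  (∀ v : E3, ‖v‖ = 1 → g v ≠ 0 → ‖v - NP‖ < ε) ∧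
  (∀ A : Matrix (Fin 2) (Fin 2) ℝ, A * A.transpose = 1 →
    ∀ v : E3, ‖v‖ = 1 → g (act2 A v) = g v) ∧
  ∫ v : Metric.sphere (0 : E3) 1, g v ∂((volume : Measure E3).toSphere) = 1

/-! ### Configuration space integrals -/

/-- `i`-th partial derivative of a map `ℝⁿ → ℝ³`. -/
def pdv {n : ℕ} (h : EuclideanSpace ℝ (Fin n) → E3) (i : Fin n)
    (x : EuclideanSpace ℝ (Fin n)) : E3 :=
  fderiv ℝ h x (EuclideanSpace.single i 1)

/-- The pullback `h*η` (for `η = g · (area form)`) evaluated at the point `x` on the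
coordinate vectors `(e_i, e_j)`. -/
def form2 {n : ℕ} (g : E3 → ℝ) (h : EuclideanSpace ℝ (Fin n) → E3)
    (x : EuclideanSpace ℝ (Fin n)) (i j : Fin n) : ℝ :=
  g (h x) * det3 (h x) (pdv h i x) (pdv h j x)

/-- `(h*η ∧ k*η)(e₀, e₁, e₂, e₃)` at `x`. -/
def wedge22 (g : E3 → ℝ) (h k : E4 → E3) (x : E4) : ℝ :=
  (1 / 4) * ∑ σ : Equiv.Perm (Fin 4),
    ((Equiv.Perm.sign σ : ℤ) : ℝ) * form2 g h x (σ 0) (σ 1) * form2 g k x (σ 2) (σ 3)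

/-- `(h*η ∧ k*η ∧ l*η)(e₀, …, e₅)` at `x`. -/
def wedge222 (g : E3 → ℝ) (h k l : E6 → E3) (x : E6) : ℝ :=
  (1 / 8) * ∑ σ : Equiv.Perm (Fin 6),
    ((Equiv.Perm.sign σ : ℤ) : ℝ) * form2 g h x (σ 0) (σ 1) * form2 g k x (σ 2) (σ 3) *
      form2 g l x (σ 4) (σ 5)

/-- The configuration space `C_X = {x₁ < x₂ < x₃ < x₄}`. -/
def CX : Set E4 := {x | x 0 < x 1 ∧ x 1 < x 2 ∧ x 2 < x 3}

/-- The integrand `ω_X = h₁₃*η ∧ h₄₂*η` for a long knot. -/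
def omegaX (f : ℝ → E3) (g : E3 → ℝ) : E4 → ℝ :=
  wedge22 g (fun x => unitv (f (x 2) - f (x 0))) (fun x => unitv (f (x 1) - f (x 3)))

/-- The configuration space integral `I_X(f)` of a long knot. -/
def IX (f : ℝ → E3) (g : E3 → ℝ) : ℝ := ∫ x in CX, omegaX f g x

/-- The free point `x₄ ∈ ℝ³` in a `Y`-configuration `(x₁,x₂,x₃;x₄) ∈ ℝ³ × ℝ³ = ℝ⁶`. -/
def ptY (x : E6) : E3 := mk3 (x 3) (x 4) (x 5)

/-- The configuration space `C_Y(f)` for a long knot. -/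
def CY (f : ℝ → E3) : Set E6 :=
  {x | x 0 < x 1 ∧ x 1 < x 2 ∧ ptY x ≠ f (x 0) ∧ ptY x ≠ f (x 1) ∧ ptY x ≠ f (x 2)}

/-- The integrand `ω_Y = h₁₄*η ∧ h₄₂*η ∧ h₃₄*η` for a long knot. -/
def omegaY (f : ℝ → E3) (g : E3 → ℝ) : E6 → ℝ :=
  wedge222 g (fun x => unitv (ptY x - f (x 0))) (fun x => unitv (f (x 1) - ptY x))
    (fun x => unitv (ptY x - f (x 2)))

/-- The configuration space integral `I_Y(f)` of a long knot. -/
def IY (f : ℝ → E3) (g : E3 → ℝ) : ℝ := ∫ x in CY f, omegaY f g x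

def CL1 : Set E4 := {x | x 0 < x 1}
def CL2 : Set E4 := {x | x 1 < x 2}
def CL3 : Set E4 := {x | x 2 < x 3}

/-- The integrand of `I_{𝒳₁}(f)` for a 3-component long link. -/
def omegaL1 (f : Fin 3 → ℝ → E3) (g : E3 → ℝ) : E4 → ℝ :=
  wedge22 g (fun x => unitv (f 1 (x 2) - f 0 (x 0))) (fun x => unitv (f 2 (x 3) - f 0 (x 1)))

/-- The integrand of `I_{𝒳₂}(f)` for a 3-component long link. -/
def omegaL2 (f : Fin 3 → ℝ → E3) (g : E3 → ℝ) : E4 → ℝ :=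
  wedge22 g (fun x => unitv (f 1 (x 1) - f 0 (x 0))) (fun x => unitv (f 1 (x 2) - f 2 (x 3)))

/-- The integrand of `I_{𝒳₃}(f)` for a 3-component long link. -/
def omegaL3 (f : Fin 3 → ℝ → E3) (g : E3 → ℝ) : E4 → ℝ :=
  wedge22 g (fun x => unitv (f 2 (x 2) - f 0 (x 0))) (fun x => unitv (f 1 (x 1) - f 2 (x 3)))

/-- The configuration space integral `I_{𝒳₁}(f)`. -/
def IL1 (f : Fin 3 → ℝ → E3) (g : E3 → ℝ) : ℝ := ∫ x in CL1, omegaL1 f g x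

/-- The configuration space integral `I_{𝒳₂}(f)`. -/
def IL2 (f : Fin 3 → ℝ → E3) (g : E3 → ℝ) : ℝ := ∫ x in CL2, omegaL2 f g x

/-- The configuration space integral `I_{𝒳₃}(f)`. -/
def IL3 (f : Fin 3 → ℝ → E3) (g : E3 → ℝ) : ℝ := ∫ x in CL3, omegaL3 f g x

/-- The configuration space `C_𝒴(f)` for a 3-component long link. -/
def CYL (f : Fin 3 → ℝ → E3) : Set E6 :=
  {x | ptY x ≠ f 0 (x 0) ∧ ptY x ≠ f 1 (x 1) ∧ ptY x ≠ f 2 (x 2)}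

/-- The integrand `ω_𝒴 = h₁₄*η ∧ h₄₂*η ∧ h₃₄*η` for a 3-component long link. -/
def omegaYL (f : Fin 3 → ℝ → E3) (g : E3 → ℝ) : E6 → ℝ :=
  wedge222 g (fun x => unitv (ptY x - f 0 (x 0))) (fun x => unitv (f 1 (x 1) - ptY x))
    (fun x => unitv (ptY x - f 2 (x 2)))

/-- The configuration space integral `I_𝒴(f)`. -/
def ILY (f : Fin 3 → ℝ → E3) (g : E3 → ℝ) : ℝ := ∫ x in CYL f, omegaYL f g x

/-! ### Model triple points -/

/-- The affine parametrization `t ↦ a + t • v` of a straight segment. -/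
def seg (a v : E3) (t : ℝ) : E3 := a + t • v

/-- A model triple point: three straight segments `S₁, S₂, S₃` (indexed by `0, 1, 2`),
`S_k` parametrized by `seg (a k) (v k) : (-δ, δ) → ℝ³`, all parallel to the plane
`N^⊥`, whose projections to `N^⊥` meet pairwise transversely at the single common point
which is the projection of each midpoint `a k`, and with `S₂` higher than `S₁`, `S₃`. -/
def IsModelTriple (a v : Fin 3 → E3) : Prop :=
  (∀ k, v k 2 = 0) ∧ (∀ k, v k ≠ 0) ∧
  pr12 (a 0) = pr12 (a 1) ∧ pr12 (a 1) = pr12 (a 2) ∧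
  (∀ j k, j ≠ k → cross2 (v j) (v k) ≠ 0) ∧
  a 0 2 < a 1 2 ∧ a 2 2 < a 1 2

/-- A model triple point of type `(←, s₁, s₂, s₃)`: `S₁` passes over `S₃`, and the signs
of the crossings `S₁–S₃`, `S₁–S₂`, `S₂–S₃` are `s₁, s₂, s₃` respectively. -/
def ModelLeft (a v : Fin 3 → E3) (s1 s2 s3 : ℝ) : Prop :=
  IsModelTriple a v ∧ a 2 2 < a 0 2 ∧
  s1 = Real.sign (cross2 (v 0) (v 2)) ∧
  s2 = Real.sign (cross2 (v 1) (v 0)) ∧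
  s3 = Real.sign (cross2 (v 1) (v 2))

/-- A model triple point of type `(→, s₁, s₂, s₃)`: `S₃` passes over `S₁`, and the signs
of the crossings `S₁–S₃`, `S₁–S₂`, `S₂–S₃` are `s₁, s₂, s₃` respectively. -/
def ModelRight (a v : Fin 3 → E3) (s1 s2 s3 : ℝ) : Prop :=
  IsModelTriple a v ∧ a 0 2 < a 2 2 ∧
  s1 = Real.sign (cross2 (v 2) (v 0)) ∧
  s2 = Real.sign (cross2 (v 1) (v 0)) ∧
  s3 = Real.sign (cross2 (v 1) (v 2))

/-- The cube `(-δ, δ)⁴ ⊆ ℝ⁴`. -/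
def cube4 (δ : ℝ) : Set E4 := {x | ∀ i, |x i| < δ}

/-- The model configuration space integral `I_X^{X′₁}`: the two points `t₁ < t₂` lie on
`S₁`, the point `t₃` on `S₂` and the point `t₄` on `S₃`; the maps are
`h₁₃ = unit (f₂(t₃) - f₁(t₁))` and `h₄₂ = unit (f₁(t₂) - f₃(t₄))`. -/
def IX1model (a v : Fin 3 → E3) (δ : ℝ) (g : E3 → ℝ) : ℝ :=
  ∫ x in cube4 δ ∩ {x : E4 | x 0 < x 1},
    wedge22 g (fun x => unitv (seg (a 1) (v 1) (x 2) - seg (a 0) (v 0) (x 0)))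
      (fun x => unitv (seg (a 0) (v 0) (x 1) - seg (a 2) (v 2) (x 3))) x

/-- The model configuration space integral `I_X^{X′₂}` (`(X′₂, l)` for a model of type
`←`, `(X′₂, r)` for a model of type `→`): the two points `t₂ < t₃` lie on `S₂`, the
point `t₁` on `S₁` and the point `t₄` on `S₃`; the maps are
`h₁₃ = unit (f₂(t₃) - f₁(t₁))` and `h₄₂ = unit (f₂(t₂) - f₃(t₄))`. -/
def IX2model (a v : Fin 3 → E3) (δ : ℝ) (g : E3 → ℝ) : ℝ :=
  ∫ x in cube4 δ ∩ {x : E4 | x 1 < x 2},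
    wedge22 g (fun x => unitv (seg (a 1) (v 1) (x 2) - seg (a 0) (v 0) (x 0)))
      (fun x => unitv (seg (a 1) (v 1) (x 1) - seg (a 2) (v 2) (x 3))) x

/-- The model configuration space integral `I_X^{X′₃}`: the two points `t₃ < t₄` lie on
`S₃`, the point `t₁` on `S₁` and the point `t₂` on `S₂`; the maps are
`h₁₃ = unit (f₃(t₃) - f₁(t₁))` and `h₄₂ = unit (f₂(t₂) - f₃(t₄))`. -/
def IX3model (a v : Fin 3 → E3) (δ : ℝ) (g : E3 → ℝ) : ℝ :=
  ∫ x in cube4 δ ∩ {x : E4 | x 2 < x 3},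
    wedge22 g (fun x => unitv (seg (a 2) (v 2) (x 2) - seg (a 0) (v 0) (x 0)))
      (fun x => unitv (seg (a 1) (v 1) (x 1) - seg (a 2) (v 2) (x 3))) x

/-- The model `Y`-integral `I_Y^{s₁,s₂,s₃}` over `(-δ,δ)³ × ℝ³`: the point `t_k` lies on
`S_k` and `x₄ ∈ ℝ³` is free; the maps are `h₁₄ = unit (x₄ - f₁(t₁))`,
`h₄₂ = unit (f₂(t₂) - x₄)` and `h₃₄ = unit (x₄ - f₃(t₃))`. -/
def IYmodel (a v : Fin 3 → E3) (δ : ℝ) (g : E3 → ℝ) : ℝ :=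
  ∫ x in {x : E6 | |x 0| < δ ∧ |x 1| < δ ∧ |x 2| < δ ∧
      ptY x ≠ seg (a 0) (v 0) (x 0) ∧ ptY x ≠ seg (a 1) (v 1) (x 1) ∧
      ptY x ≠ seg (a 2) (v 2) (x 2)},
    wedge222 g (fun x => unitv (ptY x - seg (a 0) (v 0) (x 0)))
      (fun x => unitv (seg (a 1) (v 1) (x 1) - ptY x))
      (fun x => unitv (ptY x - seg (a 2) (v 2) (x 2))) x

/-- Near every (triple or higher) multiple point of the diagram, the strands of the long
knot `f` are straight segments parallel to the plane `N^⊥`. -/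
def StraightNearMultipleK (f : ℝ → E3) : Prop :=
  ∀ t u v : ℝ, t ≠ u → u ≠ v → t ≠ v →
    pr12 (f t) = pr12 (f u) → pr12 (f u) = pr12 (f v) →
    ∃ δ > (0 : ℝ), ∃ w : E3, w 2 = 0 ∧ ∀ s : ℝ, |s - t| < δ → f s = f t + (s - t) • w

/-- Near every (triple or higher) multiple point of the diagram, the strands of the long
link `f` are straight segments parallel to the plane `N^⊥`. -/
def StraightNearMultipleL (f : Fin 3 → ℝ → E3) : Prop :=
  ∀ (i j k : Fin 3) (t u v : ℝ), (i, t) ≠ (j, u) → (j, u) ≠ (k, v) → (i, t) ≠ (k, v) →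
    pr12 (f i t) = pr12 (f j u) → pr12 (f j u) = pr12 (f k v) →
    ∃ δ > (0 : ℝ), ∃ w : E3, w 2 = 0 ∧ ∀ s : ℝ, |s - t| < δ → f i s = f i t + (s - t) • w

/-! ### Closed 2-component links and the linking number -/

/-- A smooth loop in `ℝ³`, parametrized with period 1 and injective on a period. -/
def IsLoop (f : ℝ → E3) : Prop :=
  ContDiff ℝ (⊤ : ℕ∞) f ∧ (∀ t, f (t + 1) = f t) ∧ (∀ t, deriv f t ≠ 0) ∧
    ∀ s t : ℝ, f s = f t → ∃ n : ℤ, t - s = n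

/-- The diagram of the 2-component link `(f 0, f 1)` has only transverse double points. -/
def OnlyDouble2 (f : Fin 2 → ℝ → E3) : Prop :=
  (∀ i j s t, f i s ≠ f j t → pr12 (f i s) = pr12 (f j t) →
      cross2 (deriv (f i) s) (deriv (f j) t) ≠ 0) ∧
  ∀ i j k s t u, f i s ≠ f j t → f j t ≠ f k u → f i s ≠ f k u →
    pr12 (f i s) = pr12 (f j t) → pr12 (f j t) = pr12 (f k u) → False

/-- The crossings of the diagram at which `f₂` passes over `f₁` (one parameter period). -/
def Crossing12 (f₁ f₂ : ℝ → E3) : Set (ℝ × ℝ) :=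
  {p | p.1 ∈ Ico (0 : ℝ) 1 ∧ p.2 ∈ Ico (0 : ℝ) 1 ∧
    pr12 (f₁ p.1) = pr12 (f₂ p.2) ∧ pr3 (f₁ p.1) < pr3 (f₂ p.2)}

/-- The sum of the signs of the crossings of the diagram at which `f₂` passes over `f₁`;
this is the linking number `lk(f₁, f₂)`, i.e. the mapping degree of
`h : S¹ × S¹ → S²`. -/
def lkSum (f₁ f₂ : ℝ → E3) : ℝ :=
  ∑ᶠ p ∈ Crossing12 f₁ f₂, Real.sign (cross2 (deriv f₂ p.2) (deriv f₁ p.1))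

/-- The fundamental domain `[0,1) × [0,1)` of `S¹ × S¹`. -/
def sq01 : Set E2 := {x | x 0 ∈ Ico (0 : ℝ) 1 ∧ x 1 ∈ Ico (0 : ℝ) 1}

/-- `∫_{S¹×S¹} h*η` for `h(x₁,x₂) = unit (f₂(x₂) - f₁(x₁))`. -/
def lkIntegral (f₁ f₂ : ℝ → E3) (g : E3 → ℝ) : ℝ :=
  ∫ x in sq01, form2 g (fun x : E2 => unitv (f₂ (x 1) - f₁ (x 0))) x 0 1

lemma mk3_0 (x y z : ℝ) : mk3 x y z 0 = x := rfl
lemma mk3_1 (x y z : ℝ) : mk3 x y z 1 = y := rfl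
lemma mk3_2 (x y z : ℝ) : mk3 x y z 2 = z := rfl

lemma E3_ext {v w : E3} (h0 : v 0 = w 0) (h1 : v 1 = w 1) (h2 : v 2 = w 2) : v = w := by
  ext i; fin_cases i <;> assumption

lemma norm_sq3 (v : E3) : ‖v‖ ^ 2 = v 0 ^ 2 + v 1 ^ 2 + v 2 ^ 2 := by
  rw [EuclideanSpace.norm_sq_eq, Fin.sum_univ_three]; simp

lemma unitv_smul {c : ℝ} (hc : 0 < c) (w : E3) : unitv (c • w) = unitv w := by
  unfold unitv
  rw [norm_smul, smul_smul, Real.norm_of_nonneg hc.le]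
  congr 1
  field_simp

lemma norm_unitv {w : E3} (hw : w ≠ 0) : ‖unitv w‖ = 1 := by
  unfold unitv
  rw [norm_smul, norm_inv, norm_norm, inv_mul_cancel₀ (norm_ne_zero_iff.2 hw)]

lemma ne_zero_of_two {w : E3} (hw : 0 < w 2) : w ≠ 0 := by
  rintro rfl; simp at hw

/-- partial derivatives of a normalized map -/
lemma pdv_unitv {F : E4 → E3} {L : E4 →L[ℝ] E3} {x : E4} (hF : HasFDerivAt F L x)
    (hx : F x ≠ 0) : ∃ β : Fin 4 → ℝ, ∀ i, pdv (fun x => unitv (F x)) i x =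
      ‖F x‖⁻¹ • L (EuclideanSpace.single i 1) + β i • F x := by
  have hn : DifferentiableAt ℝ (fun x => ‖F x‖⁻¹) x :=
    (hF.differentiableAt.norm ℝ hx).inv (norm_ne_zero_iff.2 hx)
  have h := hn.hasFDerivAt.smul hF
  refine ⟨fun i => fderiv ℝ (fun x => ‖F x‖⁻¹) x (EuclideanSpace.single i 1), fun i => ?_⟩
  unfold pdv unitv
  have h2 : fderiv ℝ (fun x => ‖F x‖⁻¹ • F x) x = _ := h.fderiv
  rw [h2]
  simp

lemma form2_unitv (g : E3 → ℝ) {F : E4 → E3} {L : E4 →L[ℝ] E3} {x : E4}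
    (hF : HasFDerivAt F L x) (hx : F x ≠ 0) (i j : Fin 4) :
    form2 g (fun x => unitv (F x)) x i j = g (unitv (F x)) * ‖F x‖⁻¹ ^ 3 *
      det3 (F x) (L (EuclideanSpace.single i 1)) (L (EuclideanSpace.single j 1)) := by
  obtain ⟨β, hβ⟩ := pdv_unitv hF hx
  unfold form2
  rw [hβ i, hβ j]
  simp only [det3, unitv, PiLp.add_apply, PiLp.smul_apply, smul_eq_mul]
  ring

lemma perm_sum (f k : Fin 4 → Fin 4 → ℝ) (hf : ∀ i j, (i = 1 ∨ i = 3 ∨ j = 1 ∨ j = 3) → f i j = 0)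
    (hf2 : f 2 0 = - f 0 2) (hk2 : k 3 1 = - k 1 3) :
    (1 / 4) * ∑ σ : Equiv.Perm (Fin 4),
    ((Equiv.Perm.sign σ : ℤ) : ℝ) * f (σ 0) (σ 1) * k (σ 2) (σ 3) = - (f 0 2 * k 1 3) := by
  classical
  have key : ∀ σ : Equiv.Perm (Fin 4), ((Equiv.Perm.sign σ : ℤ) : ℝ) * f (σ 0) (σ 1) * k (σ 2) (σ 3)
      = if (σ 0 = 1 ∨ σ 0 = 3 ∨ σ 1 = 1 ∨ σ 1 = 3) then 0 else - (f 0 2 * k 1 3) := by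
    intro σ
    split_ifs with h
    · rw [hf _ _ h]; ring
    · have h4 : (σ 0 = 0 ∧ σ 1 = 2 ∧ σ 2 = 1 ∧ σ 3 = 3 ∧ Equiv.Perm.sign σ = -1) ∨
        (σ 0 = 0 ∧ σ 1 = 2 ∧ σ 2 = 3 ∧ σ 3 = 1 ∧ Equiv.Perm.sign σ = 1) ∨
        (σ 0 = 2 ∧ σ 1 = 0 ∧ σ 2 = 1 ∧ σ 3 = 3 ∧ Equiv.Perm.sign σ = 1) ∨
        (σ 0 = 2 ∧ σ 1 = 0 ∧ σ 2 = 3 ∧ σ 3 = 1 ∧ Equiv.Perm.sign σ = -1) := by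
        revert σ; decide
      rcases h4 with ⟨a, b, c, d, e⟩ | ⟨a, b, c, d, e⟩ | ⟨a, b, c, d, e⟩ | ⟨a, b, c, d, e⟩ <;>
      · rw [a, b, c, d, e]
        simp [hf2, hk2]
  rw [Finset.sum_congr rfl fun σ _ => key σ, Finset.sum_ite]
  have hc : (Finset.univ.filter fun σ : Equiv.Perm (Fin 4) =>
    ¬ (σ 0 = 1 ∨ σ 0 = 3 ∨ σ 1 = 1 ∨ σ 1 = 3)).card = 4 := by decide
  rw [Finset.sum_const, Finset.sum_const, hc]
  simp

/-- the rescaled density in the affine chart `z = 1` -/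
def GG (g : E3 → ℝ) (u : ℝ × ℝ) : ℝ :=
  g (unitv (mk3 u.1 u.2 1)) * ‖mk3 u.1 u.2 1‖⁻¹ ^ 3

lemma GG_eq (g : E3 → ℝ) (w : E3) (hw : 0 < w 2) :
    g (unitv w) * ‖w‖⁻¹ ^ 3 = GG g (w 0 / w 2, w 1 / w 2) * (w 2)⁻¹ ^ 3 := by
  have h : w = w 2 • mk3 (w 0 / w 2) (w 1 / w 2) 1 := by
    apply E3_ext <;> simp [mk3_0, mk3_1, mk3_2] <;> field_simp
  conv_lhs => rw [h]
  rw [unitv_smul hw, norm_smul, Real.norm_of_nonneg hw.le, GG]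
  simp only [mul_inv, mul_pow]
  ring

/-- the matrix of the map to the chart `z = 1` -/
def TM (c : ℝ) (p q : E3) : Matrix (Fin 2) (Fin 2) ℝ :=
  !![- q 0 / c, p 0 / c; - q 1 / c, p 1 / c]

def TT (c : ℝ) (p q : E3) : (ℝ × ℝ) →ₗ[ℝ] (ℝ × ℝ) :=
  Matrix.toLin (Module.Basis.finTwoProd ℝ) (Module.Basis.finTwoProd ℝ) (TM c p q)

lemma TT_det (c : ℝ) (p q : E3) : LinearMap.det (TT c p q) = cross2 p q / c ^ 2 := by
  rw [TT, LinearMap.det_toLin, TM, Matrix.det_fin_two_of, cross2]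
  ring

lemma TT_apply (c : ℝ) (p q : E3) (s t : ℝ) :
    TT c p q (s, t) = ((t * p 0 - s * q 0) / c, (t * p 1 - s * q 1) / c) := by
  rw [TT, TM, Matrix.toLin_finTwoProd_apply]
  ext <;> simp <;> ring

lemma wedge_eq (g : E3 → ℝ) (b p a q b' p' a' q' : E3) (hp : p 2 = 0) (hq : q 2 = 0)
    (hp' : p' 2 = 0) (hq' : q' 2 = 0)
    (h0 : a 0 = b 0) (h1 : a 1 = b 1) (h2 : a 2 < b 2)
    (h0' : a' 0 = b' 0) (h1' : a' 1 = b' 1) (h2' : a' 2 < b' 2) (x : E4) :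
    wedge22 g (fun x => unitv (seg b p (x 2) - seg a q (x 0)))
      (fun x => unitv (seg b' p' (x 1) - seg a' q' (x 3))) x =
    (cross2 p q / (b 2 - a 2) ^ 2 * GG g (TT (b 2 - a 2) p q (x 0, x 2))) *
    (cross2 p' q' / (b' 2 - a' 2) ^ 2 * GG g (TT (b' 2 - a' 2) p' q' (x 3, x 1))) := by
  have hL : HasFDerivAt (fun x : E4 => seg b p (x 2) - seg a q (x 0))
      ((EuclideanSpace.proj (2 : Fin 4) : E4 →L[ℝ] ℝ).smulRight p -
        (EuclideanSpace.proj (0 : Fin 4) : E4 →L[ℝ] ℝ).smulRight q) x :=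
    ((((EuclideanSpace.proj (2 : Fin 4) : E4 →L[ℝ] ℝ).smulRight p).hasFDerivAt).const_add b).sub
      ((((EuclideanSpace.proj (0 : Fin 4) : E4 →L[ℝ] ℝ).smulRight q).hasFDerivAt).const_add a)
  have hL' : HasFDerivAt (fun x : E4 => seg b' p' (x 1) - seg a' q' (x 3))
      ((EuclideanSpace.proj (1 : Fin 4) : E4 →L[ℝ] ℝ).smulRight p' -
        (EuclideanSpace.proj (3 : Fin 4) : E4 →L[ℝ] ℝ).smulRight q') x :=
    ((((EuclideanSpace.proj (1 : Fin 4) : E4 →L[ℝ] ℝ).smulRight p').hasFDerivAt).const_add b').sub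
      ((((EuclideanSpace.proj (3 : Fin 4) : E4 →L[ℝ] ℝ).smulRight q').hasFDerivAt).const_add a')
  have e2 : (seg b p (x 2) - seg a q (x 0)) 2 = b 2 - a 2 := by simp [seg, hp, hq]
  have e0 : (seg b p (x 2) - seg a q (x 0)) 0 = x 2 * p 0 - x 0 * q 0 := by simp [seg, h0]
  have e1 : (seg b p (x 2) - seg a q (x 0)) 1 = x 2 * p 1 - x 0 * q 1 := by simp [seg, h1]
  have e2' : (seg b' p' (x 1) - seg a' q' (x 3)) 2 = b' 2 - a' 2 := by simp [seg, hp', hq']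
  have e0' : (seg b' p' (x 1) - seg a' q' (x 3)) 0 = x 1 * p' 0 - x 3 * q' 0 := by
    simp [seg, h0']
  have e1' : (seg b' p' (x 1) - seg a' q' (x 3)) 1 = x 1 * p' 1 - x 3 * q' 1 := by
    simp [seg, h1']
  have c : 0 < b 2 - a 2 := sub_pos.2 h2
  have c' : 0 < b' 2 - a' 2 := sub_pos.2 h2'
  have hne : seg b p (x 2) - seg a q (x 0) ≠ 0 := ne_zero_of_two (by rw [e2]; exact c)
  have hne' : seg b' p' (x 1) - seg a' q' (x 3) ≠ 0 := ne_zero_of_two (by rw [e2']; exact c')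
  have hf := form2_unitv g hL hne
  have hk := form2_unitv g hL' hne'
  have gg := GG_eq g (seg b p (x 2) - seg a q (x 0)) (by rw [e2]; exact c)
  have gg' := GG_eq g (seg b' p' (x 1) - seg a' q' (x 3)) (by rw [e2']; exact c')
  rw [e0, e1, e2, ← TT_apply] at gg
  rw [e0', e1', e2', ← TT_apply] at gg'
  rw [wedge22, perm_sum]
  · rw [hf, hk, gg, gg']
    simp only [det3, e0, e1, e2, e0', e1', e2']
    simp [hp, hq, hp', hq', cross2]
    field_simp
    ring
  · intro i j h
    rw [hf]
    rcases h with rfl | rfl | rfl | rfl <;> simp [det3]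
  · rw [hf, hf]; simp [det3]; ring
  · rw [hk, hk]; simp [det3]; ring

lemma coord_le (v : E3) (i : Fin 3) : |v i| ≤ ‖v‖ := by
  simpa using PiLp.norm_apply_le v i

lemma eta_dir {ε : ℝ} {g : E3 → ℝ} (hg : IsEtaForm ε g) (hε : ε < 1 / 2) {w : E3} (hw : w ≠ 0)
    (h : g (unitv w) ≠ 0) : 0 < w 2 ∧ |w 0| < 2 * ε * w 2 ∧ |w 1| < 2 * ε * w 2 := by
  have hn : 0 < ‖w‖ := norm_pos_iff.2 hw
  have h1 := hg.2.1 _ (norm_unitv hw) h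
  have c0 := (coord_le _ 0).trans_lt h1
  have c1 := (coord_le _ 1).trans_lt h1
  have c2 := (coord_le _ 2).trans_lt h1
  simp only [unitv, NP, PiLp.sub_apply, PiLp.smul_apply, mk3_0, mk3_1, mk3_2, sub_zero,
    smul_eq_mul, abs_mul, abs_inv, abs_norm] at c0 c1 c2
  have hε0 : 0 < ε := lt_of_le_of_lt (norm_nonneg _) h1
  rw [inv_mul_lt_iff₀ hn] at c0 c1
  rw [abs_lt] at c2
  have c3 : 1 / 2 < ‖w‖⁻¹ * w 2 := by linarith [c2.1]
  rw [lt_inv_mul_iff₀ hn] at c3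
  refine ⟨by linarith, ?_, ?_⟩ <;> nlinarith

lemma mk3_ne (x y : ℝ) : mk3 x y 1 ≠ 0 := ne_zero_of_two (by rw [mk3_2]; norm_num)

lemma GG_supp {ε : ℝ} {g : E3 → ℝ} (hg : IsEtaForm ε g) (hε : ε < 1 / 2) {u : ℝ × ℝ}
    (h : GG g u ≠ 0) : ‖u‖ < 2 * ε := by
  have := eta_dir hg hε (mk3_ne u.1 u.2) (left_ne_zero_of_mul h)
  simp only [mk3_0, mk3_1, mk3_2, mul_one] at this
  rw [Prod.norm_def]
  exact max_lt this.2.1 this.2.2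

lemma continuous_mk3 : Continuous fun u : (ℝ × ℝ) × ℝ => mk3 u.1.1 u.1.2 u.2 := by
  unfold mk3
  refine (PiLp.continuous_toLp 2 (fun _ : Fin 3 => ℝ)).comp ?_
  refine continuous_pi fun i => ?_
  fin_cases i <;> simp <;> fun_prop

lemma continuous_mk3' : Continuous fun u : (ℝ × ℝ) => mk3 u.1 u.2 1 :=
  continuous_mk3.comp (by fun_prop : Continuous fun u : ℝ × ℝ => (u, (1 : ℝ)))

lemma GG_cont {ε : ℝ} {g : E3 → ℝ} (hg : IsEtaForm ε g) : Continuous (GG g) := by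
  have hi : Continuous fun u : (ℝ × ℝ) => ‖mk3 u.1 u.2 1‖⁻¹ :=
    continuous_mk3'.norm.inv₀ fun u => norm_ne_zero_iff.2 (mk3_ne _ _)
  unfold GG unitv
  exact (hg.1.continuous.comp (hi.smul continuous_mk3')).mul (hi.pow 3)

lemma GG_int {ε : ℝ} {g : E3 → ℝ} (hg : IsEtaForm ε g) (hε : ε < 1 / 2) :
    Integrable (GG g) := by
  refine (GG_cont hg).integrable_of_hasCompactSupport ?_
  refine HasCompactSupport.of_support_subset_isCompact
    (isCompact_closedBall (0 : ℝ × ℝ) (2 * ε)) fun u hu => ?_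
  rw [mem_closedBall_zero_iff]
  exact (GG_supp hg hε hu).le

lemma GG_even {ε : ℝ} {g : E3 → ℝ} (hg : IsEtaForm ε g) (u : ℝ × ℝ) : GG g (-u) = GG g u := by
  have e : ‖mk3 (-u.1) (-u.2) 1‖ = ‖mk3 u.1 u.2 1‖ := by
    have := norm_sq3 (mk3 (-u.1) (-u.2) 1)
    have h2 := norm_sq3 (mk3 u.1 u.2 1)
    simp only [mk3_0, mk3_1, mk3_2, neg_sq] at this h2
    rw [← h2] at this
    exact (sq_eq_sq₀ (norm_nonneg _) (norm_nonneg _)).1 this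
  unfold GG
  simp only [Prod.fst_neg, Prod.snd_neg, e]
  congr 1
  rw [← hg.2.2.1 (-1) (by simp) (unitv (mk3 u.1 u.2 1)) (norm_unitv (mk3_ne _ _))]
  congr 1
  apply E3_ext <;> simp [act2, mk3_0, mk3_1, mk3_2, unitv, e]

lemma sphere_int (g : E3 → ℝ) (hg : Continuous g) :
    ∫ v : Metric.sphere (0 : E3) 1, g v ∂((volume : Measure E3).toSphere) =
      3 * ∫ x : E3, if ‖x‖ < 1 ∧ x ≠ 0 then g (unitv x) else 0 := by
  have hemb : MeasurableEmbedding (Subtype.val ∘ (homeomorphUnitSphereProd E3).symm) :=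
    ((MeasurableEmbedding.subtype_coe (measurableSet_singleton _).compl).comp
      (Homeomorph.measurableEmbedding _))
  have hφ : ∀ y, (Subtype.val ∘ (homeomorphUnitSphereProd E3).symm) y = (y.2 : ℝ) • (y.1 : E3) :=
    fun y => homeomorphUnitSphereProd_symm_apply_coe E3 y
  have hn : ∀ y : Metric.sphere (0 : E3) 1 × Ioi (0 : ℝ), ‖(y.2 : ℝ) • (y.1 : E3)‖ = y.2 := by
    intro y
    have h1 : ‖(y.1 : E3)‖ = 1 := by simp
    have h2 : (0 : ℝ) < y.2 := y.2.2
    rw [norm_smul, h1, Real.norm_of_nonneg h2.le, mul_one]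
  have hu : ∀ y : Metric.sphere (0 : E3) 1 × Ioi (0 : ℝ), unitv ((y.2 : ℝ) • (y.1 : E3)) = y.1 := by
    intro y
    have h1 : ‖(y.1 : E3)‖ = 1 := by simp
    rw [unitv_smul y.2.2, unitv, h1]; simp
  have hne : ∀ y : Metric.sphere (0 : E3) 1 × Ioi (0 : ℝ), (y.2 : ℝ) • (y.1 : E3) ≠ 0 := by
    intro y
    rw [← norm_pos_iff, hn]; exact y.2.2
  have hrange : range (Subtype.val ∘ (homeomorphUnitSphereProd E3).symm) = {x : E3 | x ≠ 0} := by
    rw [range_comp, (homeomorphUnitSphereProd E3).symm.surjective.range_eq, image_univ,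
      Subtype.range_coe]
    rfl
  rw [Measure.toSphere, ← Nat.cast_smul_eq_nsmul ENNReal, integral_smul_measure, Measure.fst,
    integral_map measurable_fst.aemeasurable
      (by fun_prop : Continuous fun v : Metric.sphere (0 : E3) 1 => g v).aestronglyMeasurable,
    ← integral_indicator (MeasurableSet.univ.prod measurableSet_Iio)]
  simp only [smul_eq_mul, finrank_euclideanSpace, Fintype.card_fin,
    Nat.cast_ofNat]
  congr 1
  have h1 : ∀ y, (univ ×ˢ Iio (⟨1, mem_Ioi.2 one_pos⟩ : Ioi (0 : ℝ))).indicator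
      (fun y : Metric.sphere (0 : E3) 1 × Ioi (0 : ℝ) => g y.1) y =
      (fun x : E3 => if ‖x‖ < 1 ∧ x ≠ 0 then g (unitv x) else 0)
        ((Subtype.val ∘ (homeomorphUnitSphereProd E3).symm) y) := by
    intro y
    rw [hφ]
    simp only [hn, hu, indicator_apply]
    congr 1
    simp [← Subtype.coe_lt_coe]
    intro _
    have h := hne y
    simpa using h
  rw [integral_congr_ae (Eventually.of_forall h1)]
  refine (hemb.integral_map
    (fun x : E3 => if ‖x‖ < 1 ∧ x ≠ 0 then g (unitv x) else 0)).symm.trans ?_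
  rw [hemb.map_comap, hrange]
  change ∫ x in ({0}ᶜ : Set E3), _ = _
  rw [← integral_indicator (measurableSet_singleton (0 : E3)).compl]
  refine integral_congr_ae (Eventually.of_forall fun x => ?_)
  by_cases hx : x = 0 <;> simp [hx]

def eq3 : (ℝ × ℝ) × ℝ ≃ᵐ (Fin 3 → ℝ) where
  toFun u := ![u.1.1, u.1.2, u.2]
  invFun x := ((x 0, x 1), x 2)
  left_inv u := by simp
  right_inv x := by ext i; fin_cases i <;> rfl
  measurable_toFun := by
    refine measurable_pi_iff.2 fun i => ?_
    fin_cases i <;> simp <;> fun_prop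
  measurable_invFun := by
    show Measurable fun x : Fin 3 → ℝ => ((x 0, x 1), x 2)
    fun_prop

lemma eq3_mp : MeasurePreserving eq3 := by
  refine ⟨eq3.measurable, ?_⟩
  symm
  refine Measure.pi_eq fun s hs => ?_
  rw [Measure.map_apply eq3.measurable (MeasurableSet.univ_pi hs)]
  have : eq3 ⁻¹' (univ.pi s) = (s 0 ×ˢ s 1) ×ˢ s 2 := by
    ext u
    simp only [mem_preimage, mem_univ_pi, Fin.forall_fin_succ, mem_prod]
    simp [eq3, and_assoc]
  rw [this, Measure.volume_eq_prod, Measure.volume_eq_prod, Measure.prod_prod, Measure.prod_prod, Fin.prod_univ_three]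

def eq4 : (ℝ × ℝ) × (ℝ × ℝ) ≃ᵐ (Fin 4 → ℝ) where
  toFun u := ![u.1.1, u.2.2, u.1.2, u.2.1]
  invFun x := ((x 0, x 2), (x 3, x 1))
  left_inv u := by simp
  right_inv x := by ext i; fin_cases i <;> rfl
  measurable_toFun := by
    refine measurable_pi_iff.2 fun i => ?_
    fin_cases i <;> simp <;> fun_prop
  measurable_invFun := by
    show Measurable fun x : Fin 4 → ℝ => ((x 0, x 2), (x 3, x 1))
    fun_prop

lemma eq4_mp : MeasurePreserving eq4 := by
  refine ⟨eq4.measurable, ?_⟩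
  symm
  refine Measure.pi_eq fun s hs => ?_
  rw [Measure.map_apply eq4.measurable (MeasurableSet.univ_pi hs)]
  have : eq4 ⁻¹' (univ.pi s) = (s 0 ×ˢ s 2) ×ˢ (s 3 ×ˢ s 1) := by
    ext u
    simp only [mem_preimage, mem_univ_pi, Fin.forall_fin_succ, mem_prod]
    simp [eq4]
    tauto
  rw [this, Measure.volume_eq_prod, Measure.volume_eq_prod, Measure.prod_prod, Measure.prod_prod, Measure.prod_prod, Fin.prod_univ_four]
  ring

def eqE3 : (ℝ × ℝ) × ℝ ≃ᵐ E3 := eq3.trans (MeasurableEquiv.toLp 2 (Fin 3 → ℝ))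
def eqE4 : (ℝ × ℝ) × (ℝ × ℝ) ≃ᵐ E4 := eq4.trans (MeasurableEquiv.toLp 2 (Fin 4 → ℝ))

lemma eqE3_mp : MeasurePreserving eqE3 := (PiLp.volume_preserving_toLp (Fin 3)).comp eq3_mp
lemma eqE4_mp : MeasurePreserving eqE4 := (PiLp.volume_preserving_toLp (Fin 4)).comp eq4_mp
lemma eqE3_apply (u : (ℝ × ℝ) × ℝ) : eqE3 u = mk3 u.1.1 u.1.2 u.2 := rfl
lemma eqE4_symm_apply (x : E4) : eqE4.symm x = ((x 0, x 2), (x 3, x 1)) := rfl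



lemma unitv_meas : Measurable unitv := by
  unfold unitv; fun_prop

lemma ball_int {ε : ℝ} {g : E3 → ℝ} (hg : IsEtaForm ε g) :
    Integrable (fun x : E3 => if ‖x‖ < 1 ∧ x ≠ 0 then g (unitv x) else 0) := by
  obtain ⟨C, hC⟩ := (isCompact_sphere (0 : E3) 1).exists_bound_of_continuousOn
    hg.1.continuous.continuousOn
  have hs : MeasurableSet {x : E3 | ‖x‖ < 1 ∧ x ≠ 0} :=
    (measurableSet_lt (f := fun x : E3 => ‖x‖) (g := fun _ => (1 : ℝ)) (by fun_prop)
      (by fun_prop)).inter (measurableSet_singleton (0 : E3)).compl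
  have h : (fun x : E3 => if ‖x‖ < 1 ∧ x ≠ 0 then g (unitv x) else 0) =
      {x : E3 | ‖x‖ < 1 ∧ x ≠ 0}.indicator (fun x => g (unitv x)) := by
    ext x; simp [indicator_apply]
  rw [h, integrable_indicator_iff hs]
  refine IntegrableOn.of_bound ?_
    (hg.1.continuous.measurable.comp unitv_meas).aestronglyMeasurable C ?_
  · refine lt_of_le_of_lt (measure_mono ?_) (measure_ball_lt_top (x := (0 : E3)) (r := 1))
    intro x hx
    simpa using hx.1
  · filter_upwards [ae_restrict_mem hs] with x hx
    exact hC _ (by simpa using norm_unitv hx.2)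

def nn (u : ℝ × ℝ) : ℝ := ‖mk3 u.1 u.2 1‖

lemma nn_ge (u : ℝ × ℝ) : 1 ≤ nn u := by
  have := coord_le (mk3 u.1 u.2 1) 2
  simpa [mk3_2, nn] using this

lemma nn_cont : Continuous nn := continuous_mk3'.norm

lemma inner_int (n : ℝ) (hn : 1 ≤ n) :
    ∫ z : ℝ, (if 0 < z ∧ z * n < 1 then z ^ 2 else 0) = n⁻¹ ^ 3 / 3 := by
  have hn0 : 0 < n := by linarith
  have h : (fun z : ℝ => if 0 < z ∧ z * n < 1 then z ^ 2 else 0) =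
      (Ioo 0 n⁻¹).indicator (fun z => z ^ 2) := by
    ext z
    simp only [indicator_apply, mem_Ioo]
    congr 1
    rw [← one_div, lt_div_iff₀ hn0]
  rw [h, integral_indicator measurableSet_Ioo, ← integral_Ioc_eq_integral_Ioo,
    ← intervalIntegral.integral_of_le (by positivity), integral_pow]
  norm_num

lemma GG_total {ε : ℝ} {g : E3 → ℝ} (hg : IsEtaForm ε g) (hε : ε < 1 / 2) :
    ∫ u, GG g u = 1 := by
  have h0 := hg.2.2.2
  rw [sphere_int g hg.1.continuous] at h0
  set F : E3 → ℝ := fun x => if ‖x‖ < 1 ∧ x ≠ 0 then g (unitv x) else 0 with hF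
  have hFi : Integrable F := ball_int hg
  have hHi : Integrable (fun u : (ℝ × ℝ) × ℝ => F (eqE3 u)) :=
    (eqE3_mp.integrable_comp_emb eqE3.measurableEmbedding).2 hFi
  have e1 : ∫ x, F x = ∫ z : ℝ, ∫ y : ℝ × ℝ, F (eqE3 (y, z)) := by
    rw [← eqE3_mp.integral_comp' F, Measure.volume_eq_prod, integral_prod_symm _ hHi]
  let K : ℝ → ℝ × ℝ → ℝ := fun z u =>
    (GG g u * nn u ^ 3) * (if 0 < z ∧ z * nn u < 1 then z ^ 2 else 0)
  have e2 : ∀ z : ℝ, ∫ y : ℝ × ℝ, F (eqE3 (y, z)) = ∫ u, K z u := by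
    intro z
    rcases le_or_gt z 0 with hz | hz
    · have a1 : ∀ y : ℝ × ℝ, F (eqE3 (y, z)) = 0 := by
        intro y
        simp only [hF]
        split_ifs with h
        · by_contra hne
          have := (eta_dir hg hε h.2 hne).1
          rw [eqE3_apply, mk3_2] at this
          exact absurd this (not_lt.2 hz)
        · rfl
      have a2 : ∀ u, K z u = 0 := by
        intro u
        simp [K, not_lt.2 hz]
      simp [a1, a2]
    · have a1 : ∀ u : ℝ × ℝ, K z u = z ^ 2 * F (eqE3 (z • u, z)) := by
        intro u
        have hu : eqE3 (z • u, z) = z • mk3 u.1 u.2 1 := by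
          rw [eqE3_apply]
          apply E3_ext <;> simp [mk3_0, mk3_1, mk3_2]
        have hne : z • mk3 u.1 u.2 1 ≠ 0 := smul_ne_zero hz.ne' (mk3_ne _ _)
        have hnn : nn u ≠ 0 := by have := nn_ge u; linarith
        have hps : GG g u * nn u ^ 3 = g (unitv (mk3 u.1 u.2 1)) := by
          unfold GG; change _ * (nn u)⁻¹ ^ 3 * _ = _
          field_simp
        simp only [hF, K, hu, hps, unitv_smul hz, hne, hz, norm_smul, Real.norm_of_nonneg hz.le,
          true_and, ne_eq, not_false_eq_true, and_true]
        change _ * (if z * nn u < 1 then z ^ 2 else 0) = z ^ 2 * (if z * nn u < 1 then _ else 0)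
        split_ifs <;> ring
      rw [integral_congr_ae (Eventually.of_forall a1), integral_const_mul,
        Measure.integral_comp_smul volume (fun y : ℝ × ℝ => F (eqE3 (y, z))) z]
      simp
      field_simp
  have hψ : Integrable (fun u => GG g u * nn u ^ 3) := by
    refine ((GG_cont hg).mul (nn_cont.pow 3)).integrable_of_hasCompactSupport ?_
    refine HasCompactSupport.of_support_subset_isCompact
      (isCompact_closedBall (0 : ℝ × ℝ) (2 * ε)) fun u hu => ?_
    rw [mem_closedBall_zero_iff]
    exact (GG_supp hg hε (left_ne_zero_of_mul hu)).le
  have hK : Integrable (Function.uncurry K) (volume.prod volume) := by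
    have hI : Integrable ((Ioo (0 : ℝ) 1).indicator (fun _ => (1 : ℝ))) := by
      rw [integrable_indicator_iff measurableSet_Ioo]
      simp
    refine (hI.mul_prod hψ).mono ?_ (Eventually.of_forall ?_)
    · refine Measurable.aestronglyMeasurable ?_
      have m1 := (GG_cont hg).measurable
      have m2 := nn_cont.measurable
      refine Measurable.mul (by fun_prop) (Measurable.ite ?_ (by fun_prop) (by fun_prop))
      exact (measurableSet_lt (f := fun _ => (0 : ℝ)) (g := fun a : ℝ × (ℝ × ℝ) => a.1)
        (by fun_prop) (by fun_prop)).inter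
        (measurableSet_lt (f := fun a : ℝ × (ℝ × ℝ) => a.1 * nn a.2) (g := fun _ => (1 : ℝ))
        (by fun_prop) (by fun_prop))
    · rintro ⟨z, u⟩
      simp only [Function.uncurry, K]
      rw [norm_mul, norm_mul ((Ioo (0 : ℝ) 1).indicator _ _)]
      refine (mul_comm _ _).trans_le (mul_le_mul_of_nonneg_right ?_ (norm_nonneg _))
      split_ifs with h
      · have hz1 : z < 1 := by nlinarith [nn_ge u, h.1, h.2]
        rw [indicator_of_mem (show z ∈ Ioo (0 : ℝ) 1 from ⟨h.1, hz1⟩)]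
        rw [Real.norm_of_nonneg (sq_nonneg _), norm_one]
        nlinarith [h.1]
      · simp
  have e3 : ∫ z : ℝ, ∫ u, K z u = ∫ u, GG g u / 3 := by
    rw [integral_integral_swap hK]
    refine integral_congr_ae (Eventually.of_forall fun u => ?_)
    simp only [K]
    rw [integral_const_mul, inner_int _ (nn_ge u)]
    have hnn : nn u ≠ 0 := by have := nn_ge u; linarith
    field_simp
  rw [e1, integral_congr_ae (Eventually.of_forall e2), e3, integral_div] at h0
  linarith


lemma TT_integral (G : ℝ × ℝ → ℝ) {c : ℝ} {p q : E3} (hd : cross2 p q / c ^ 2 ≠ 0) :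
    ∫ x, cross2 p q / c ^ 2 * G (TT c p q x) = Real.sign (cross2 p q / c ^ 2) * ∫ u, G u := by
  have hdet : LinearMap.det (TT c p q) ≠ 0 := by rwa [TT_det]
  let e := (LinearMap.equivOfDetNeZero (TT c p q) hdet).toContinuousLinearEquiv.toHomeomorph
  have hmap := Measure.map_linearMap_addHaar_eq_smul_addHaar (volume : Measure (ℝ × ℝ)) hdet
  have h : ∫ u, G u ∂(Measure.map (TT c p q) volume) = ∫ x, G (TT c p q x) :=
    e.measurableEmbedding.integral_map G
  rw [hmap, integral_smul_measure, TT_det] at h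
  rw [integral_const_mul, ← h, ENNReal.toReal_ofReal (abs_nonneg _), smul_eq_mul, ← mul_assoc]
  congr 1
  rcases lt_or_gt_of_ne hd with h | h
  · rw [Real.sign_of_neg h, abs_of_neg (inv_lt_zero.2 h), mul_neg, mul_inv_cancel₀ hd]
  · rw [Real.sign_of_pos h, abs_of_pos (inv_pos.2 h), mul_inv_cancel₀ hd]

lemma TT_integrable (G : ℝ × ℝ → ℝ) {c : ℝ} {p q : E3} (hd : cross2 p q / c ^ 2 ≠ 0)
    (hG : Integrable G) : Integrable fun x => cross2 p q / c ^ 2 * G (TT c p q x) := by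
  have hdet : LinearMap.det (TT c p q) ≠ 0 := by rwa [TT_det]
  let e := (LinearMap.equivOfDetNeZero (TT c p q) hdet).toContinuousLinearEquiv.toHomeomorph
  have hmap := Measure.map_linearMap_addHaar_eq_smul_addHaar (volume : Measure (ℝ × ℝ)) hdet
  have h : Integrable G (Measure.map (TT c p q) volume) ↔ Integrable (fun x => G (TT c p q x)) :=
    e.measurableEmbedding.integrable_map_iff
  rw [hmap] at h
  exact (h.1 (hG.smul_measure ENNReal.ofReal_ne_top)).const_mul _

lemma TT_small {c : ℝ} {p q : E3} (hd : cross2 p q / c ^ 2 ≠ 0) {δ : ℝ} (hδ : 0 < δ) :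
    ∃ r > 0, ∀ x, ‖TT c p q x‖ < r → ‖x‖ < δ := by
  have hdet : LinearMap.det (TT c p q) ≠ 0 := by rwa [TT_det]
  let e := (LinearMap.equivOfDetNeZero (TT c p q) hdet).toContinuousLinearEquiv
  have hc : ContinuousAt e.symm 0 := e.symm.continuous.continuousAt
  obtain ⟨r, hr, h⟩ := Metric.continuousAt_iff.1 hc δ hδ
  refine ⟨r, hr, fun x hx => ?_⟩
  have hex : e x = TT c p q x := rfl
  have := h (x := e x) (by rw [dist_zero_right, hex]; exact hx)
  simpa using this

lemma null_diag {i j : Fin 4} (hij : i ≠ j) : (volume : Measure E4) {x | x i = x j} = 0 := by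
  let L : E4 →ₗ[ℝ] ℝ := ((EuclideanSpace.proj i : E4 →L[ℝ] ℝ) - EuclideanSpace.proj j : E4 →L[ℝ] ℝ)
  have h : {x : E4 | x i = x j} = (LinearMap.ker L : Set E4) := by
    ext x; simp [L, sub_eq_zero]
  rw [h]
  refine Measure.addHaar_submodule _ _ fun ht => ?_
  have : EuclideanSpace.single i (1 : ℝ) ∈ LinearMap.ker L := by rw [ht]; trivial
  simp [L, hij.symm] at this

lemma half_int {Φ : E4 → ℝ} (hΦ : Integrable Φ) (he : ∀ x, Φ (-x) = Φ x) {i j : Fin 4}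
    (hij : i ≠ j) : ∫ x in {x : E4 | x i < x j}, Φ x = (∫ x, Φ x) / 2 := by
  have m1 : MeasurableSet {x : E4 | x i < x j} :=
    measurableSet_lt (f := fun x : E4 => x i) (g := fun x : E4 => x j) (by fun_prop) (by fun_prop)
  have m2 : MeasurableSet {x : E4 | x j < x i} :=
    measurableSet_lt (f := fun x : E4 => x j) (g := fun x : E4 => x i) (by fun_prop) (by fun_prop)
  have hsym : ∫ x in {x : E4 | x i < x j}, Φ x = ∫ x in {x : E4 | x j < x i}, Φ x := by
    rw [← integral_indicator m1, ← integral_indicator m2, ← integral_neg_eq_self]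
    refine integral_congr_ae (Eventually.of_forall fun x => ?_)
    simp [indicator_apply, he]
  have hadd := integral_add_compl m1 hΦ
  have hae : ({x : E4 | x i < x j}ᶜ : Set E4) =ᵐ[volume] {x : E4 | x j < x i} := by
    have : ∀ᵐ x : E4, ¬ (x i = x j) := by
      rw [ae_iff]; simpa using null_diag hij
    filter_upwards [this] with x hx
    refine propext ⟨fun h => ?_, fun h => ?_⟩
    · exact lt_of_le_of_ne (not_lt.1 h) (Ne.symm hx)
    · exact not_lt.2 (le_of_lt h)
  rw [setIntegral_congr_set hae, ← hsym] at hadd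
  linarith

lemma sign_div_sq (x : ℝ) {c : ℝ} (hc : 0 < c) : Real.sign (x / c ^ 2) = Real.sign x := by
  have : 0 < c ^ 2 := by positivity
  rcases lt_trichotomy x 0 with h | h | h
  · rw [Real.sign_of_neg h, Real.sign_of_neg (div_neg_of_neg_of_pos h this)]
  · simp [h]
  · rw [Real.sign_of_pos h, Real.sign_of_pos (div_pos h this)]

theorem core (b p a q b' p' a' q' : E3) (hp : p 2 = 0) (hq : q 2 = 0)
    (hp' : p' 2 = 0) (hq' : q' 2 = 0)
    (h0 : pr12 a = pr12 b) (h2 : a 2 < b 2) (h0' : pr12 a' = pr12 b') (h2' : a' 2 < b' 2)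
    (hc : cross2 p q ≠ 0) (hc' : cross2 p' q' ≠ 0) (i j : Fin 4) (hij : i ≠ j) (δ : ℝ)
    (hδ : 0 < δ) : ∃ ε₀ > (0 : ℝ), ∀ ε : ℝ, 0 < ε → ε < ε₀ → ∀ g : E3 → ℝ, IsEtaForm ε g →
      ∫ x in cube4 δ ∩ {x : E4 | x i < x j},
        wedge22 g (fun x => unitv (seg b p (x 2) - seg a q (x 0)))
          (fun x => unitv (seg b' p' (x 1) - seg a' q' (x 3))) x =
      Real.sign (cross2 p q) * Real.sign (cross2 p' q') / 2 := by
  obtain ⟨h0, h1⟩ := Prod.ext_iff.1 h0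
  obtain ⟨h0', h1'⟩ := Prod.ext_iff.1 h0'
  have c : 0 < b 2 - a 2 := sub_pos.2 h2
  have c' : 0 < b' 2 - a' 2 := sub_pos.2 h2'
  have hd : cross2 p q / (b 2 - a 2) ^ 2 ≠ 0 := div_ne_zero hc (by positivity)
  have hd' : cross2 p' q' / (b' 2 - a' 2) ^ 2 ≠ 0 := div_ne_zero hc' (by positivity)
  obtain ⟨r, hr, hr1⟩ := TT_small hd hδ
  obtain ⟨r', hr', hr1'⟩ := TT_small hd' hδ
  refine ⟨min (1 / 2) (min (r / 2) (r' / 2)), by positivity, fun ε hε hlt g hg => ?_⟩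
  obtain ⟨hε1, hε2⟩ := lt_min_iff.1 hlt
  obtain ⟨hε2, hε3⟩ := lt_min_iff.1 hε2
  let A : ℝ × ℝ → ℝ := fun x =>
    cross2 p q / (b 2 - a 2) ^ 2 * GG g (TT (b 2 - a 2) p q x)
  let A' : ℝ × ℝ → ℝ := fun x =>
    cross2 p' q' / (b' 2 - a' 2) ^ 2 * GG g (TT (b' 2 - a' 2) p' q' x)
  let Φ : E4 → ℝ := fun x => A (x 0, x 2) * A' (x 3, x 1)
  have hA : Integrable A := TT_integrable _ hd (GG_int hg hε1)
  have hA' : Integrable A' := TT_integrable _ hd' (GG_int hg hε1)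
  have hAe : ∀ x, A (-x) = A x := fun x => by simp only [A, map_neg, GG_even hg]
  have hAe' : ∀ x, A' (-x) = A' x := fun x => by simp only [A', map_neg, GG_even hg]
  have hAs : ∀ x, A x ≠ 0 → ‖x‖ < δ := fun x hx =>
    hr1 x ((GG_supp hg hε1 (right_ne_zero_of_mul hx)).trans (by linarith))
  have hAs' : ∀ x, A' x ≠ 0 → ‖x‖ < δ := fun x hx =>
    hr1' x ((GG_supp hg hε1 (right_ne_zero_of_mul hx)).trans (by linarith))
  have mpsymm : MeasurePreserving eqE4.symm := eqE4_mp.symm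
  have hΦi : Integrable Φ :=
    (mpsymm.integrable_comp_emb eqE4.symm.measurableEmbedding).2 (hA.mul_prod hA')
  have hΦint : ∫ x, Φ x = Real.sign (cross2 p q) * Real.sign (cross2 p' q') := by
    have h : ∫ x, Φ x = ∫ z : (ℝ × ℝ) × (ℝ × ℝ), A z.1 * A' z.2 :=
      mpsymm.integral_comp' (fun z : (ℝ × ℝ) × (ℝ × ℝ) => A z.1 * A' z.2)
    rw [h, Measure.volume_eq_prod, integral_prod_mul, TT_integral _ hd, TT_integral _ hd',
      GG_total hg hε1, sign_div_sq _ c, sign_div_sq _ c', mul_one, mul_one]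
  have hΦe : ∀ x, Φ (-x) = Φ x := fun x => by
    have e1 := hAe (x 0, x 2)
    have e2 := hAe' (x 3, x 1)
    simp only [Prod.neg_mk] at e1 e2
    simp only [Φ, PiLp.neg_apply, e1, e2]
  have hΦs : ∀ x, x ∉ cube4 δ → Φ x = 0 := by
    intro x hx
    by_contra hne
    apply hx
    have e1 := hAs _ (left_ne_zero_of_mul hne)
    have e2 := hAs' _ (right_ne_zero_of_mul hne)
    rw [Prod.norm_def, max_lt_iff] at e1 e2
    intro k
    fin_cases k
    exacts [e1.1, e2.2, e1.2, e2.1]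
  have hw : ∀ x, wedge22 g (fun x => unitv (seg b p (x 2) - seg a q (x 0)))
          (fun x => unitv (seg b' p' (x 1) - seg a' q' (x 3))) x = Φ x := fun x =>
    wedge_eq g b p a q b' p' a' q' hp hq hp' hq' h0 h1 h2 h0' h1' h2' x
  simp only [hw]
  rw [← hΦint, ← half_int hΦi hΦe hij]
  have m1 : MeasurableSet {x : E4 | x i < x j} :=
    measurableSet_lt (f := fun x : E4 => x i) (g := fun x : E4 => x j) (by fun_prop) (by fun_prop)
  refine (setIntegral_eq_of_subset_of_forall_sdiff_eq_zero m1 inter_subset_right ?_).symm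
  intro x hx
  exact hΦs x fun h => hx.2 ⟨h, hx.1⟩


/-- explicit values of the model triple-point integrals. For every
model triple point, all signs `s₁, s₂, s₃ ∈ {+1, -1}` and all sufficiently small
`ε > 0`: `I_X^{X′₁,s₁,s₂,s₃} = s₁s₂/2`,
`I_X^{(X′₂,l),s₁,s₂,s₃} = I_X^{(X′₂,r),s₁,s₂,s₃} = s₂s₃/2` and
`I_X^{X′₃,s₁,s₂,s₃} = s₃s₁/2`. -/
theorem statement16 (s1 s2 s3 : ℝ) (h1 : s1 = 1 ∨ s1 = -1) (h2 : s2 = 1 ∨ s2 = -1)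
    (h3 : s3 = 1 ∨ s3 = -1) :
    (∀ (a v : Fin 3 → E3) (δ : ℝ), 0 < δ → ModelLeft a v s1 s2 s3 →
      ∃ ε₀ > (0 : ℝ), ∀ ε : ℝ, 0 < ε → ε < ε₀ → ∀ g : E3 → ℝ, IsEtaForm ε g →
        IX1model a v δ g = s1 * s2 / 2 ∧ IX2model a v δ g = s2 * s3 / 2) ∧
    (∀ (a v : Fin 3 → E3) (δ : ℝ), 0 < δ → ModelRight a v s1 s2 s3 →
      ∃ ε₀ > (0 : ℝ), ∀ ε : ℝ, 0 < ε → ε < ε₀ → ∀ g : E3 → ℝ, IsEtaForm ε g →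
        IX2model a v δ g = s2 * s3 / 2 ∧ IX3model a v δ g = s3 * s1 / 2) := by
  refine ⟨fun a v δ hδ hm => ?_, fun a v δ hδ hm => ?_⟩
  · obtain ⟨⟨hv, -, p01, p12, hc, l01, l21⟩, l20, e1, e2, e3⟩ := hm
    obtain ⟨ε₁, hε₁, H₁⟩ := core (a 1) (v 1) (a 0) (v 0) (a 0) (v 0) (a 2) (v 2) (hv 1) (hv 0)
      (hv 0) (hv 2) p01 l01 (p01.trans p12).symm l20 (hc 1 0 (by decide)) (hc 0 2 (by decide))
      0 1 (by decide) δ hδ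
    obtain ⟨ε₂, hε₂, H₂⟩ := core (a 1) (v 1) (a 0) (v 0) (a 1) (v 1) (a 2) (v 2) (hv 1) (hv 0)
      (hv 1) (hv 2) p01 l01 p12.symm l21 (hc 1 0 (by decide)) (hc 1 2 (by decide))
      1 2 (by decide) δ hδ
    refine ⟨min ε₁ ε₂, lt_min hε₁ hε₂, fun ε hε hlt g hg => ⟨?_, ?_⟩⟩
    · rw [IX1model, H₁ ε hε (hlt.trans_le (min_le_left _ _)) g hg, ← e1, ← e2]
      ring
    · rw [IX2model, H₂ ε hε (hlt.trans_le (min_le_right _ _)) g hg, ← e2, ← e3]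
  · obtain ⟨⟨hv, -, p01, p12, hc, l01, l21⟩, l02, e1, e2, e3⟩ := hm
    obtain ⟨ε₁, hε₁, H₁⟩ := core (a 2) (v 2) (a 0) (v 0) (a 1) (v 1) (a 2) (v 2) (hv 2) (hv 0)
      (hv 1) (hv 2) (p01.trans p12) l02 p12.symm l21 (hc 2 0 (by decide)) (hc 1 2 (by decide))
      2 3 (by decide) δ hδ
    obtain ⟨ε₂, hε₂, H₂⟩ := core (a 1) (v 1) (a 0) (v 0) (a 1) (v 1) (a 2) (v 2) (hv 1) (hv 0)
      (hv 1) (hv 2) p01 l01 p12.symm l21 (hc 1 0 (by decide)) (hc 1 2 (by decide))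
      1 2 (by decide) δ hδ
    refine ⟨min ε₁ ε₂, lt_min hε₁ hε₂, fun ε hε hlt g hg => ⟨?_, ?_⟩⟩
    · rw [IX2model, H₂ ε hε (hlt.trans_le (min_le_right _ _)) g hg, ← e2, ← e3]
    · rw [IX3model, H₁ ε hε (hlt.trans_le (min_le_left _ _)) g hg, ← e1, ← e3]
      ring
end
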